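/- Power series expansion of the FL¹ solution of gIBq: let k ≥ 2 be an integer. There exists c > 0, depending only on k, such that for every M > 0, every T with 0 < T ≤ 1 and T²·M^{k−1} ≤ c, and all v₀, v₁ ∈ L¹(ℝ) with ‖v₀‖_{L¹(ℝ)} + ‖v₁‖_{L¹(ℝ)} ≤ M, any Fourier-side solution v : [0, T] → L¹(ℝ) of gIBq with nonlinearity u^k and data (v₀, v₁) satisfying sup_{0 ≤ t ≤ T} ‖v(t)‖_{L¹(ℝ)} ≤ 2M is given by the absolutely convergent series v(t) = Σ_{j=0}^{∞} Ξ̂_j(v₀, v₁)(t) in L¹(ℝ), for every t ∈ [0, T], with Σ_{j=0}^{∞} sup_{0 ≤ t ≤ T} ‖Ξ̂_j(v₀,v₁)(t)‖_{L¹(ℝ)} < ∞. -/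

import Mathlib

open MeasureTheory Filter
open scoped ENNReal

noncomputable section

/-- The Japanese bracket weight `⟨ξ⟩^s = (1+ξ²)^(s/2)`. -/
def jbw (s ξ : ℝ) : ℝ := (1 + ξ ^ 2) ^ (s / 2)

/-- `λ(ξ) = |ξ|/⟨ξ⟩`. -/
def lam (ξ : ℝ) : ℝ := |ξ| / (1 + ξ ^ 2) ^ ((1 : ℝ) / 2)

/-- The multiplier `m(t,ξ) = sin(tλ(ξ))/λ(ξ)` for `ξ ≠ 0`, `m(t,0) = t`. -/
def mker (t ξ : ℝ) : ℝ := if ξ = 0 then t else Real.sin (t * lam ξ) / lam ξ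

/-- Fourier side linear propagator `Ŝ(t)(v₀,v₁)`. -/
def Shat (t : ℝ) (v₀ v₁ : ℝ → ℂ) (ξ : ℝ) : ℂ :=
  (Real.cos (t * lam ξ) : ℂ) * v₀ ξ + (mker t ξ : ℂ) * v₁ ξ

/-- Convolution of complex valued functions on `ℝ`. -/
def conv (f g : ℝ → ℂ) (ξ : ℝ) : ℂ := ∫ η, f η * g (ξ - η)

/-- Iterated convolution of a list of functions. -/
def convList : List (ℝ → ℂ) → ℝ → ℂ
  | [] => fun _ => 0
  | [f] => f
  | f :: g :: fs => conv f (convList (g :: fs))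

/-- Fourier side Duhamel operator `Î_k`. -/
def Ihat (k : ℕ) (w : Fin k → ℝ → ℝ → ℂ) (t ξ : ℝ) : ℂ :=
  ∫ t' in (0:ℝ)..t,
    ((Real.sin ((t - t') * lam ξ) * lam ξ : ℝ) : ℂ) * convList (List.ofFn fun i => w i t') ξ

/-- Continuity of a curve of functions with respect to the `L¹` norm, on `[0,T]`. -/
def ContinuousL1On (T : ℝ) (v : ℝ → ℝ → ℂ) : Prop :=
  ∀ t₀ ∈ Set.Icc (0 : ℝ) T,
    Tendsto (fun t => eLpNorm (fun ξ => v t ξ - v t₀ ξ) 1 volume)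
      (nhdsWithin t₀ (Set.Icc (0 : ℝ) T)) (nhds 0)

/-- Fourier-side solution of the generalized improved Boussinesq equation with
nonlinearity `u^k` and data `(v₀, v₁)` on `[0, T]`. -/
def IsGIBqSol (k : ℕ) (T : ℝ) (v₀ v₁ : ℝ → ℂ) (v : ℝ → ℝ → ℂ) : Prop :=
  (∀ t ∈ Set.Icc (0 : ℝ) T, Integrable (v t)) ∧
  ContinuousL1On T v ∧
  ∀ t ∈ Set.Icc (0 : ℝ) T,
    ∀ᵐ ξ ∂volume, v t ξ = Shat t v₀ v₁ ξ + Ihat k (fun _ => v) t ξ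

/-- Picard iterates `Ξ̂_j` for gIBq on the Fourier side. -/
def Xi (k : ℕ) (v₀ v₁ : ℝ → ℂ) : ℕ → ℝ → ℝ → ℂ
  | 0 => fun t => Shat t v₀ v₁
  | (j+1) => fun t ξ =>
      ∑ p ∈ (Finset.Nat.antidiagonalTuple k j).attach,
        Ihat k (fun i => Xi k v₀ v₁ (p.1 i)) t ξ
decreasing_by
  have hsum := Finset.Nat.mem_antidiagonalTuple.mp p.2
  have hle : p.1 i ≤ j := by
    calc p.1 i ≤ ∑ i', p.1 i' :=
          Finset.single_le_sum (fun _ _ => Nat.zero_le _) (Finset.mem_univ i)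
      _ = j := hsum
  omega

/-- The `FL^{s,p}` norm on the Fourier side: `‖⟨ξ⟩^s w‖_{L^p}`. -/
def FLnorm (s : ℝ) (p : ℝ≥0∞) (w : ℝ → ℂ) : ℝ≥0∞ :=
  eLpNorm (fun ξ => jbw s ξ * ‖w ξ‖) p volume

end

/-!
On the Fourier side the Duhamel operator is an iterated convolution, for which `L¹(ℝ)` is a Banach
algebra, followed by a Volterra integral whose kernel is a multiplier bounded by `|t - t'|`. So the
equation reads `x = a + N(x, …, x)` in the Banach space `C([0, T], L¹(ℝ))`, where `N` is a
continuous `k`-linear map of norm at most `T²` and, as `T ≤ 1`, the linear evolution `a` has norm at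
most `M`. The `j`-th Picard iterate is the part of the formal solution in which `N` occurs `j`
times. If `‖a‖ + ‖N‖ Rᵏ ≤ R`, then by induction the partial sums of the norms of the iterates stay
below `R`, and the sum of the series solves the equation, because `N` of a partial sum differs from
the next partial sum only by terms of large total degree. Finally `‖N‖ k Rᵏ⁻¹ < 1` makes
`x ↦ a + N(x, …, x)` a contraction on the ball of radius `R`, so that every solution in this ball is
the sum of the series. With `R = 2M` both conditions hold as soon as `T² Mᵏ⁻¹ ≤ 1 / (k 2ᵏ)`.

A curve in `L¹(ℝ)` only determines its values up to null sets, at each time separately, whereas the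
Duhamel integral is taken pointwise in the frequency. The two are matched by means of jointly
measurable versions of the curves.
-/

section Tuples

/-- The `k`-tuples of natural numbers with entry sum less than `J`. -/
def tuplesSumLT (k J : ℕ) : Finset (Fin k → ℕ) :=
  (Finset.range J).biUnion (Finset.Nat.antidiagonalTuple k)

lemma mem_tuplesSumLT {k J : ℕ} {p : Fin k → ℕ} : p ∈ tuplesSumLT k J ↔ ∑ i, p i < J := by
  simp [tuplesSumLT, Finset.Nat.mem_antidiagonalTuple]

lemma sum_tuplesSumLT {A : Type*} [AddCommMonoid A] (k J : ℕ) (f : (Fin k → ℕ) → A) :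
    ∑ p ∈ tuplesSumLT k J, f p
      = ∑ j ∈ Finset.range J, ∑ p ∈ Finset.Nat.antidiagonalTuple k j, f p := by
  refine Finset.sum_biUnion fun j _ l _ hjl => Finset.disjoint_left.mpr fun p hj hl => hjl ?_
  rw [← Finset.Nat.mem_antidiagonalTuple.mp hj, Finset.Nat.mem_antidiagonalTuple.mp hl]

lemma apply_le_of_mem_antidiagonalTuple {k j : ℕ} {p : Fin k → ℕ}
    (hp : p ∈ Finset.Nat.antidiagonalTuple k j) (i : Fin k) : p i ≤ j :=
  (Finset.single_le_sum_of_canonicallyOrdered (Finset.mem_univ i)).trans_eq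
    (Finset.Nat.mem_antidiagonalTuple.mp hp)

lemma tuplesSumLT_subset_piFinset (k J : ℕ) :
    tuplesSumLT k J ⊆ Fintype.piFinset fun _ => Finset.range J :=
  Finset.biUnion_subset.mpr fun _ hj _ hp => Fintype.mem_piFinset.mpr fun i =>
    Finset.mem_range.mpr <|
      (apply_le_of_mem_antidiagonalTuple hp i).trans_lt (Finset.mem_range.mp hj)

lemma piFinset_div_subset_tuplesSumLT (k J : ℕ) [NeZero k] :
    (Fintype.piFinset fun _ : Fin k => Finset.range (J / k)) ⊆ tuplesSumLT k J := fun p hp => by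
  have hp' : ∀ i, p i < J / k := fun i => Finset.mem_range.mp (Fintype.mem_piFinset.mp hp i)
  refine mem_tuplesSumLT.mpr ?_
  calc ∑ i, p i < ∑ _i : Fin k, J / k :=
        Finset.sum_lt_sum_of_nonempty Finset.univ_nonempty fun i _ => hp' i
    _ = k * (J / k) := by simp
    _ ≤ J := Nat.mul_div_le J k

lemma sum_piFinset_prod_eq_pow {R : Type*} [CommSemiring R] (k : ℕ) (s : Finset ℕ) (a : ℕ → R) :
    ∑ p ∈ Fintype.piFinset (fun _ : Fin k => s), ∏ i, a (p i) = (∑ j ∈ s, a j) ^ k := by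
  simp [← Finset.prod_univ_sum (fun _ : Fin k => s) fun _ j => a j]

end Tuples

section PicardSeries

variable {𝕜 E : Type*} [NontriviallyNormedField 𝕜] [NormedAddCommGroup E] [NormedSpace 𝕜 E]
  {k : ℕ} (N : ContinuousMultilinearMap 𝕜 (fun _ : Fin k => E) E) (a : E)

/-- The terms of the formal power series solution of the fixed point equation
`x = a + N(x, …, x)`: the `j`-th term collects the contributions in which `N` is applied exactly
`j` times. -/
def picardTerm : ℕ → E
  | 0 => a
  | j + 1 => ∑ p ∈ (Finset.Nat.antidiagonalTuple k j).attach, N fun i => picardTerm (p.1 i)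
decreasing_by
  exact Nat.lt_succ_of_le (apply_le_of_mem_antidiagonalTuple p.2 i)

lemma picardTerm_zero : picardTerm N a 0 = a := by
  rw [picardTerm]

lemma picardTerm_succ (j : ℕ) :
    picardTerm N a (j + 1)
      = ∑ p ∈ Finset.Nat.antidiagonalTuple k j, N fun i => picardTerm N a (p i) := by
  rw [picardTerm]
  exact Finset.sum_attach (Finset.Nat.antidiagonalTuple k j)
    fun p => N fun i => picardTerm N a (p i)

lemma sum_range_succ_picardTerm (J : ℕ) :
    ∑ j ∈ Finset.range (J + 1), picardTerm N a j
      = a + ∑ p ∈ tuplesSumLT k J, N fun i => picardTerm N a (p i) := by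
  simp only [Finset.sum_range_succ', picardTerm_zero, picardTerm_succ, sum_tuplesSumLT, add_comm]

lemma norm_sum_apply_tuple_le (s : Finset (Fin k → ℕ)) (x : ℕ → E) :
    ‖∑ p ∈ s, N fun i => x (p i)‖ ≤ ‖N‖ * ∑ p ∈ s, ∏ i, ‖x (p i)‖ := by
  rw [Finset.mul_sum]
  exact norm_sum_le_of_le s fun p _ => N.le_opNorm _

lemma sum_norm_picardTerm_le {R : ℝ} (hR : 0 ≤ R) (hN : ‖a‖ + ‖N‖ * R ^ k ≤ R) (J : ℕ) :
    ∑ j ∈ Finset.range J, ‖picardTerm N a j‖ ≤ R := by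
  induction J with
  | zero => simpa using hR
  | succ J ih =>
    have hterm (j : ℕ) : ‖picardTerm N a (j + 1)‖
        ≤ ‖N‖ * ∑ p ∈ Finset.Nat.antidiagonalTuple k j, ∏ i, ‖picardTerm N a (p i)‖ := by
      rw [picardTerm_succ]
      exact norm_sum_apply_tuple_le N _ _
    calc ∑ j ∈ Finset.range (J + 1), ‖picardTerm N a j‖
        ≤ ‖a‖ + ‖N‖ * ∑ p ∈ tuplesSumLT k J, ∏ i, ‖picardTerm N a (p i)‖ := by
          rw [Finset.sum_range_succ', picardTerm_zero, add_comm, sum_tuplesSumLT, Finset.mul_sum]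
          gcongr with j
          exact hterm j
      _ ≤ ‖a‖ + ‖N‖ * (∑ j ∈ Finset.range J, ‖picardTerm N a j‖) ^ k := by
          rw [← sum_piFinset_prod_eq_pow]
          gcongr
          exact tuplesSumLT_subset_piFinset k J
      _ ≤ ‖a‖ + ‖N‖ * R ^ k := by gcongr
      _ ≤ R := hN

lemma summable_norm_picardTerm {R : ℝ} (hR : 0 ≤ R) (hN : ‖a‖ + ‖N‖ * R ^ k ≤ R) :
    Summable fun j => ‖picardTerm N a j‖ :=
  summable_of_sum_range_le (fun _ => norm_nonneg _) (sum_norm_picardTerm_le N a hR hN)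

-- The box of side `J / k` lies in the simplex, so the terms between simplex and box are
-- dominated by a difference of two sequences with the same limit.
lemma tendsto_apply_sum_sub_sum_tuplesSumLT [NeZero k] {x : ℕ → E}
    (hx : Summable fun j => ‖x j‖) :
    Tendsto (fun J => (N fun _ => ∑ j ∈ Finset.range J, x j)
      - ∑ p ∈ tuplesSumLT k J, N fun i => x (p i)) atTop (nhds 0) := by
  set A : ℕ → ℝ := fun J => ∑ j ∈ Finset.range J, ‖x j‖
  have hA : Tendsto A atTop (nhds (∑' j, ‖x j‖)) := hx.hasSum.tendsto_sum_nat
  have hgap : Tendsto (fun J => ‖N‖ * (A J ^ k - A (J / k) ^ k)) atTop (nhds 0) := by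
    have hA' := hA.comp (Nat.tendsto_div_const_atTop (NeZero.ne k))
    simpa using ((hA.pow k).sub (hA'.pow k)).const_mul ‖N‖
  refine squeeze_zero_norm (fun J => ?_) hgap
  set box := Fintype.piFinset fun _ : Fin k => Finset.range J
  have hexpand : (N fun _ => ∑ j ∈ Finset.range J, x j) = ∑ p ∈ box, N fun i => x (p i) :=
    N.map_sum_finset (fun _ j => x j) fun _ => Finset.range J
  rw [hexpand, ← Finset.sum_sdiff (tuplesSumLT_subset_piFinset k J), add_sub_cancel_right]
  refine (norm_sum_apply_tuple_le N _ x).trans ?_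
  gcongr
  rw [le_sub_iff_add_le, ← sum_piFinset_prod_eq_pow, ← sum_piFinset_prod_eq_pow,
    ← Finset.sum_sdiff (tuplesSumLT_subset_piFinset k J)]
  gcongr
  exact piFinset_div_subset_tuplesSumLT k J

lemma tsum_picardTerm_eq [NeZero k] [CompleteSpace E]
    (hsum : Summable fun j => ‖picardTerm N a j‖) :
    ∑' j, picardTerm N a j = a + N fun _ => ∑' j, picardTerm N a j := by
  have hlim := hsum.of_norm.hasSum.tendsto_sum_nat
  have hN : Tendsto (fun J => N fun _ => ∑ j ∈ Finset.range J, picardTerm N a j) atTop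
      (nhds (N fun _ => ∑' j, picardTerm N a j)) :=
    (N.cont.tendsto _).comp (tendsto_pi_nhds.mpr fun _ => hlim)
  have hsimplex := (hN.sub (tendsto_apply_sum_sub_sum_tuplesSumLT N hsum)).const_add a
  simp only [sub_sub_cancel, sub_zero, ← sum_range_succ_picardTerm] at hsimplex
  exact tendsto_nhds_unique ((tendsto_add_atTop_iff_nat 1).mpr hlim) hsimplex

variable {N a} in
lemma eq_of_eq_add_apply_const [NeZero k] {R : ℝ} (hR : ‖N‖ * k * R ^ (k - 1) < 1) {x y : E}
    (hx : x = a + N fun _ => x) (hy : y = a + N fun _ => y) (hxR : ‖x‖ ≤ R) (hyR : ‖y‖ ≤ R) :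
    x = y := by
  have hcontract : ‖x - y‖ ≤ ‖N‖ * k * R ^ (k - 1) * ‖x - y‖ := by
    have hdiff : ‖(fun _ : Fin k => x) - fun _ => y‖ = ‖x - y‖ := pi_norm_const (x - y)
    calc ‖x - y‖ = ‖(N fun _ => x) - N fun _ => y‖ := by
          conv_lhs => rw [hx, hy, add_sub_add_left_eq_sub]
      _ ≤ ‖N‖ * k * max ‖x‖ ‖y‖ ^ (k - 1) * ‖x - y‖ := by
          simpa only [hdiff, pi_norm_const, Fintype.card_fin] using
            N.norm_image_sub_le (fun _ => x) fun _ => y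
      _ ≤ ‖N‖ * k * R ^ (k - 1) * ‖x - y‖ := by
          gcongr
          exact max_le hxR hyR
  rw [← sub_eq_zero, ← norm_le_zero_iff]
  nlinarith [norm_nonneg (x - y)]

theorem hasSum_picardTerm [NeZero k] [CompleteSpace E] {R : ℝ} (hR : 0 ≤ R)
    (hself : ‖a‖ + ‖N‖ * R ^ k ≤ R) (hcontract : ‖N‖ * k * R ^ (k - 1) < 1) {x : E}
    (hx : x = a + N fun _ => x) (hxR : ‖x‖ ≤ R) : HasSum (picardTerm N a) x := by
  have hsum := summable_norm_picardTerm N a hR hself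
  have htsum : ‖∑' j, picardTerm N a j‖ ≤ R :=
    (norm_tsum_le_tsum_norm hsum).trans <|
      hsum.tsum_le_of_sum_range_le (sum_norm_picardTerm_le N a hR hself)
  rw [eq_of_eq_add_apply_const hcontract hx (tsum_picardTerm_eq N a hsum) hxR htsum]
  exact hsum.of_norm.hasSum

end PicardSeries

section ConvolutionL1

open scoped Convolution

variable {𝕜 G E E' F : Type*} [NontriviallyNormedField 𝕜]
  [NormedAddCommGroup E] [NormedAddCommGroup E'] [NormedAddCommGroup F]
  [NormedSpace 𝕜 E] [NormedSpace 𝕜 E'] [NormedSpace 𝕜 F] [NormedSpace ℝ F]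
  [AddGroup G] [MeasurableSpace G] [MeasurableAdd₂ G] [MeasurableNeg G]
  {μ : Measure G} [SFinite μ] [μ.IsAddRightInvariant] (L : E →L[𝕜] E' →L[𝕜] F)

lemma eLpNorm_one_convolution_le {f : G → E} {g : G → E'} (hf : Integrable f μ)
    (hg : Integrable g μ) :
    eLpNorm (f ⋆[L, μ] g) 1 μ ≤ ‖L‖ₑ * eLpNorm f 1 μ * eLpNorm g 1 μ := by
  simp only [eLpNorm_one_eq_lintegral_enorm]
  calc ∫⁻ x, ‖(f ⋆[L, μ] g) x‖ₑ ∂μ ≤ ∫⁻ x, ∫⁻ y, ‖L (f y) (g (x - y))‖ₑ ∂μ ∂μ :=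
        lintegral_mono fun x => enorm_integral_le_lintegral_enorm _
    _ = ∫⁻ y, ∫⁻ x, ‖L (f y) (g (x - y))‖ₑ ∂μ ∂μ :=
        lintegral_lintegral_swap (hf.convolution_integrand L hg).aestronglyMeasurable.enorm
    _ ≤ ∫⁻ y, ‖L‖ₑ * ‖f y‖ₑ * ∫⁻ x, ‖g x‖ₑ ∂μ ∂μ := by
        refine lintegral_mono fun y => ?_
        rw [← lintegral_sub_right_eq_self (fun x => ‖g x‖ₑ) y,
          ← lintegral_const_mul' _ _ (by finiteness)]
        refine lintegral_mono fun x => ((L (f y)).le_opENorm _).trans ?_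
        gcongr
        exact L.le_opENorm _
    _ = ‖L‖ₑ * (∫⁻ y, ‖f y‖ₑ ∂μ) * ∫⁻ x, ‖g x‖ₑ ∂μ := by
        simp only [mul_assoc]
        rw [lintegral_const_mul' _ _ (by finiteness),
          lintegral_mul_const'' _ hf.aestronglyMeasurable.enorm]

variable [SMulCommClass ℝ 𝕜 F]

/-- The convolution of integrable functions with respect to the continuous bilinear map `L`, as a
continuous bilinear map on `L¹`. -/
noncomputable def convolutionL1 : (G →₁[μ] E) →L[𝕜] (G →₁[μ] E') →L[𝕜] (G →₁[μ] F) :=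
  let toL1 (f : G →₁[μ] E) (g : G →₁[μ] E') : G →₁[μ] F :=
    ((L1.integrable_coeFn f).integrable_convolution L (L1.integrable_coeFn g)).toL1 _
  have hexists (f : G →₁[μ] E) (g : G →₁[μ] E') : ∀ᵐ x ∂μ, ConvolutionExistsAt f g x L μ :=
    (L1.integrable_coeFn f).ae_convolution_exists L (L1.integrable_coeFn g)
  have hnorm (f : G →₁[μ] E) (g : G →₁[μ] E') : ‖toL1 f g‖ₑ ≤ ‖L‖ₑ * ‖f‖ₑ * ‖g‖ₑ := by
    rw [Integrable.enorm_toL1, ← eLpNorm_one_eq_lintegral_enorm, Lp.enorm_def, Lp.enorm_def]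
    exact eLpNorm_one_convolution_le L (L1.integrable_coeFn f) (L1.integrable_coeFn g)
  LinearMap.mkContinuous₂
    (LinearMap.mk₂ 𝕜 toL1
      (fun f f' g => by
        rw [← Integrable.toL1_add, Integrable.toL1_eq_toL1_iff,
          convolution_congr L (Lp.coeFn_add f f') .rfl]
        filter_upwards [hexists f g, hexists f' g] with x hx hx'
        exact hx.add_distrib hx')
      (fun c f g => by
        rw [← Integrable.toL1_smul', Integrable.toL1_eq_toL1_iff,
          convolution_congr L (Lp.coeFn_smul c f) .rfl, smul_convolution])
      (fun f g g' => by
        rw [← Integrable.toL1_add, Integrable.toL1_eq_toL1_iff,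
          convolution_congr L .rfl (Lp.coeFn_add g g')]
        filter_upwards [hexists f g, hexists f g'] with x hx hx'
        exact hx.distrib_add hx')
      (fun c f g => by
        rw [← Integrable.toL1_smul', Integrable.toL1_eq_toL1_iff,
          convolution_congr L .rfl (Lp.coeFn_smul c g), convolution_smul]))
    ‖L‖ fun f g => by
      simpa only [LinearMap.mk₂_apply, ENNReal.toReal_mul, toReal_enorm] using
        ENNReal.toReal_mono (by finiteness) (hnorm f g)

lemma coeFn_convolutionL1 (f : G →₁[μ] E) (g : G →₁[μ] E') :
    convolutionL1 L f g =ᵐ[μ] f ⋆[L, μ] g :=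
  ((L1.integrable_coeFn f).integrable_convolution L (L1.integrable_coeFn g)).coeFn_toL1

lemma norm_convolutionL1_le : ‖(convolutionL1 L : (G →₁[μ] E) →L[𝕜] _)‖ ≤ ‖L‖ := by
  unfold convolutionL1
  exact LinearMap.mkContinuous₂_norm_le _ (norm_nonneg L) _

end ConvolutionL1

section FoldrMultilinear

variable {𝕜 V : Type*} [NontriviallyNormedField 𝕜] [NormedAddCommGroup V] [NormedSpace 𝕜 V]
  (B : V →L[𝕜] V →L[𝕜] V)

/-- The right-nested product `B x₀ (B x₁ (⋯ (B xₙ₋₁ xₙ)))` of `n + 1` vectors with respect to a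
continuous bilinear map `B`, as a continuous multilinear map. -/
noncomputable def foldrMultilinear :
    (n : ℕ) → ContinuousMultilinearMap 𝕜 (fun _ : Fin (n + 1) => V) V
  | 0 => ContinuousMultilinearMap.ofSubsingleton 𝕜 V V (0 : Fin 1) (.id 𝕜 V)
  | n + 1 => ContinuousLinearMap.uncurryLeft
      (((ContinuousLinearMap.compContinuousMultilinearMapL 𝕜
        (fun _ : Fin (n + 1) => V) V V).flip (foldrMultilinear n)).comp B)

lemma foldrMultilinear_zero_apply (x : Fin 1 → V) : foldrMultilinear B 0 x = x 0 :=
  rfl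

lemma foldrMultilinear_succ_apply (n : ℕ) (x : Fin (n + 2) → V) :
    foldrMultilinear B (n + 1) x = B (x 0) (foldrMultilinear B n (Fin.tail x)) :=
  rfl

lemma norm_foldrMultilinear_le (n : ℕ) : ‖foldrMultilinear B n‖ ≤ ‖B‖ ^ n := by
  refine ContinuousMultilinearMap.opNorm_le_bound (by positivity) fun x => ?_
  induction n with
  | zero => simp [foldrMultilinear_zero_apply]
  | succ n ih =>
    rw [foldrMultilinear_succ_apply, Fin.prod_univ_succ]
    calc ‖B (x 0) (foldrMultilinear B n (Fin.tail x))‖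
        ≤ ‖B‖ * ‖x 0‖ * ‖foldrMultilinear B n (Fin.tail x)‖ := B.le_opNorm₂ _ _
      _ ≤ ‖B‖ * ‖x 0‖ * (‖B‖ ^ n * ∏ i, ‖Fin.tail x i‖) := by gcongr; exact ih _
      _ = ‖B‖ ^ (n + 1) * (‖x 0‖ * ∏ i : Fin (n + 1), ‖x i.succ‖) := by
        simp only [Fin.tail]
        ring

end FoldrMultilinear

section ConvList

open scoped Convolution

lemma convList_ofFn_succ (n : ℕ) (f : Fin (n + 2) → ℝ → ℂ) :
    convList (List.ofFn f) = conv (f 0) (convList (List.ofFn fun i : Fin (n + 1) => f i.succ)) := by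
  rw [List.ofFn_succ, List.ofFn_succ, convList]

lemma conv_eq_convolution (f g : ℝ → ℂ) : conv f g = f ⋆[.mul ℂ ℂ] g :=
  rfl

/-- The iterated convolution of `n + 1` factors on `L¹(ℝ)`. -/
noncomputable def convPowL1 (n : ℕ) :
    ContinuousMultilinearMap ℂ (fun _ : Fin (n + 1) => ℝ →₁[volume] ℂ) (ℝ →₁[volume] ℂ) :=
  foldrMultilinear (convolutionL1 (.mul ℂ ℂ)) n

lemma norm_convPowL1_le_one (n : ℕ) : ‖convPowL1 n‖ ≤ 1 :=
  (norm_foldrMultilinear_le _ n).trans <| pow_le_one₀ (norm_nonneg _) <|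
    (norm_convolutionL1_le _).trans (ContinuousLinearMap.opNorm_mul_le ℂ ℂ)

lemma coeFn_convPowL1 (n : ℕ) {F : Fin (n + 1) → ℝ →₁[volume] ℂ} {f : Fin (n + 1) → ℝ → ℂ}
    (hF : ∀ i, F i =ᵐ[volume] f i) : convPowL1 n F =ᵐ[volume] convList (List.ofFn f) := by
  induction n with
  | zero => simpa [convPowL1, foldrMultilinear_zero_apply, convList] using hF 0
  | succ n ih =>
    have htail : convPowL1 n (Fin.tail F) =ᵐ[volume]
        convList (List.ofFn fun i : Fin (n + 1) => f i.succ) :=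
      ih fun i => hF i.succ
    rw [convList_ofFn_succ, conv_eq_convolution, ← convolution_congr _ (hF 0) htail]
    exact coeFn_convolutionL1 _ _ _

-- Unlike a single function, a convolution of at least two factors is determined pointwise by the
-- almost everywhere classes of its factors.
lemma convList_ofFn_congr (n : ℕ) {f g : Fin (n + 2) → ℝ → ℂ} (hfg : ∀ i, f i =ᵐ[volume] g i) :
    convList (List.ofFn f) = convList (List.ofFn g) := by
  have htail : convList (List.ofFn fun i : Fin (n + 1) => f i.succ) =ᵐ[volume]
      convList (List.ofFn fun i : Fin (n + 1) => g i.succ) := by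
    cases n with
    | zero => simpa [convList] using hfg 1
    | succ n => rw [convList_ofFn_congr n fun i => hfg i.succ]
  simp only [convList_ofFn_succ, conv_eq_convolution]
  exact convolution_congr _ (hfg 0) htail

lemma stronglyMeasurable_uncurry_conv {X : Type*} [MeasurableSpace X] {f g : X → ℝ → ℂ}
    (hf : StronglyMeasurable (Function.uncurry f)) (hg : StronglyMeasurable (Function.uncurry g)) :
    StronglyMeasurable (Function.uncurry fun x => conv (f x) (g x)) := by
  have hf' : StronglyMeasurable fun q : (X × ℝ) × ℝ => f q.1.1 q.2 :=
    hf.comp_measurable (g := fun q : (X × ℝ) × ℝ => (q.1.1, q.2)) (by fun_prop)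
  have hg' : StronglyMeasurable fun q : (X × ℝ) × ℝ => g q.1.1 (q.1.2 - q.2) :=
    hg.comp_measurable (g := fun q : (X × ℝ) × ℝ => (q.1.1, q.1.2 - q.2)) (by fun_prop)
  exact (hf'.mul hg').integral_prod_right'

lemma stronglyMeasurable_uncurry_convList {X : Type*} [MeasurableSpace X] (n : ℕ)
    {w : Fin (n + 1) → X → ℝ → ℂ} (hw : ∀ i, StronglyMeasurable (Function.uncurry (w i))) :
    StronglyMeasurable (Function.uncurry fun x => convList (List.ofFn fun i => w i x)) := by
  induction n with
  | zero => simpa [convList] using hw 0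
  | succ n ih =>
    simp only [convList_ofFn_succ]
    exact stronglyMeasurable_uncurry_conv (hw 0) (ih fun i => hw i.succ)

end ConvList

section Pointwise

variable {𝕜 ι X F : Type*} {E : ι → Type*} [NontriviallyNormedField 𝕜] [Fintype ι]
  [∀ i, NormedAddCommGroup (E i)] [∀ i, NormedSpace 𝕜 (E i)]
  [NormedAddCommGroup F] [NormedSpace 𝕜 F] [TopologicalSpace X] [CompactSpace X]
  (P : ContinuousMultilinearMap 𝕜 E F)

/-- The continuous multilinear map `P` applied pointwise to continuous functions on a compact
space. -/
noncomputable def pointwiseMultilinear :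
    ContinuousMultilinearMap 𝕜 (fun i => C(X, E i)) C(X, F) :=
  MultilinearMap.mkContinuous
    { toFun W := ⟨fun x => P fun i => W i x, by fun_prop⟩
      map_update_add' W i V V' := by
        ext x
        simp [Function.apply_update (fun _ (w : C(X, E _)) => w x)]
      map_update_smul' W i c V := by
        ext x
        simp [Function.apply_update (fun _ (w : C(X, E _)) => w x)] }
    ‖P‖ fun W => by
      refine (ContinuousMap.norm_le _ (by positivity)).mpr fun x => (P.le_opNorm _).trans ?_
      gcongr with i
      exact (W i).norm_coe_le_norm x

lemma pointwiseMultilinear_apply (W : ∀ i, C(X, E i)) (x : X) :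
    pointwiseMultilinear P W x = P fun i => W i x :=
  rfl

lemma norm_pointwiseMultilinear_le : ‖pointwiseMultilinear (X := X) P‖ ≤ ‖P‖ :=
  MultilinearMap.mkContinuous_norm_le _ (norm_nonneg P) _

end Pointwise

section Volterra

variable {𝕜 E F : Type*} [NontriviallyNormedField 𝕜] [NormedAddCommGroup E] [NormedSpace 𝕜 E]
  [NormedAddCommGroup F] [NormedSpace 𝕜 F] {T B : ℝ}

lemma continuous_volterra_integrand (hT : 0 ≤ T) (K : C(ℝ, E →L[𝕜] F)) (W : C(Set.Icc 0 T, E)) :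
    Continuous (Function.uncurry fun t s : ℝ => K (t - s) (W.IccExtend hT s)) := by
  fun_prop

variable [NormedSpace ℝ F]

lemma norm_volterra_integral_le (hT : 0 ≤ T) {K : C(ℝ, E →L[𝕜] F)}
    (hK : ∀ τ ∈ Set.Icc 0 T, ‖K τ‖ ≤ B) (W : C(Set.Icc 0 T, E)) (t : Set.Icc 0 T) :
    ‖∫ s in (0 : ℝ)..t, K (t - s) (W.IccExtend hT s)‖ ≤ T * B * ‖W‖ := by
  obtain ⟨t, ht₀, htT⟩ := t
  have hB : 0 ≤ B := (norm_nonneg _).trans (hK 0 ⟨le_rfl, hT⟩)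
  have hbound : ∀ s ∈ Set.uIoc 0 t, ‖K (t - s) (W.IccExtend hT s)‖ ≤ B * ‖W‖ := by
    rw [Set.uIoc_of_le ht₀]
    exact fun s hs => (K (t - s)).le_of_opNorm_le_of_le
      (hK _ ⟨by linarith [hs.2], by linarith [hs.1]⟩) (W.norm_coe_le_norm _)
  calc ‖∫ s in (0 : ℝ)..t, K (t - s) (W.IccExtend hT s)‖ ≤ B * ‖W‖ * |t - 0| :=
        intervalIntegral.norm_integral_le_of_norm_le_const hbound
    _ ≤ B * ‖W‖ * T := by
        rw [sub_zero, abs_of_nonneg ht₀]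
        gcongr
    _ = T * B * ‖W‖ := by ring

variable [SMulCommClass ℝ 𝕜 F]

/-- The Volterra operator `W ↦ ∫₀ᵗ K(t - s) W(s) ds` on continuous curves on `[0, T]`, for a norm
continuous kernel `K` bounded by `B` on `[0, T]`. -/
noncomputable def volterra (hT : 0 ≤ T) (K : C(ℝ, E →L[𝕜] F))
    (hK : ∀ τ ∈ Set.Icc 0 T, ‖K τ‖ ≤ B) : C(Set.Icc 0 T, E) →L[𝕜] C(Set.Icc 0 T, F) :=
  have hint (W : C(Set.Icc 0 T, E)) (t : ℝ) :
      IntervalIntegrable (fun s => K (t - s) (W.IccExtend hT s)) volume 0 t :=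
    ((continuous_volterra_integrand hT K W).uncurry_left t).intervalIntegrable _ _
  LinearMap.mkContinuous
    { toFun W :=
        { toFun t := ∫ s in (0 : ℝ)..t, K (t - s) (W.IccExtend hT s)
          continuous_toFun :=
            (intervalIntegral.continuous_parametric_intervalIntegral_of_continuous
              (continuous_volterra_integrand hT K W) continuous_id).comp continuous_subtype_val }
      map_add' V W := by
        ext t
        exact (intervalIntegral.integral_congr fun s _ => map_add (K (t - s)) _ _).trans
          (intervalIntegral.integral_add (hint V t) (hint W t))
      map_smul' c W := by
        ext t
        exact (intervalIntegral.integral_congr fun s _ => map_smul (K (t - s)) _ _).trans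
          (intervalIntegral.integral_smul c _) }
    (T * B) fun W => (ContinuousMap.norm_le _ <| mul_nonneg
      (mul_nonneg hT ((norm_nonneg _).trans (hK 0 ⟨le_rfl, hT⟩))) (norm_nonneg W)).mpr
      (norm_volterra_integral_le hT hK W)

lemma volterra_apply (hT : 0 ≤ T) (K : C(ℝ, E →L[𝕜] F)) (hK : ∀ τ ∈ Set.Icc 0 T, ‖K τ‖ ≤ B)
    (W : C(Set.Icc 0 T, E)) (t : Set.Icc 0 T) :
    volterra hT K hK W t = ∫ s in (0 : ℝ)..t, K (t - s) (W.IccExtend hT s) :=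
  rfl

lemma norm_volterra_le (hT : 0 ≤ T) (K : C(ℝ, E →L[𝕜] F)) (hK : ∀ τ ∈ Set.Icc 0 T, ‖K τ‖ ≤ B) :
    ‖volterra hT K hK‖ ≤ T * B := by
  unfold volterra
  exact LinearMap.mkContinuous_norm_le _
    (mul_nonneg hT ((norm_nonneg _).trans (hK 0 ⟨le_rfl, hT⟩))) _

end Volterra

section Multiplier

variable {α : Type*} [MeasurableSpace α] {μ : Measure α}

lemma norm_le_of_ae_bound_Linfty {E : Type*} [NormedAddCommGroup E] {f : Lp E ∞ μ} {C : ℝ}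
    (hC : 0 ≤ C) (hf : ∀ᵐ x ∂μ, ‖f x‖ ≤ C) : ‖f‖ ≤ C := by
  rw [Lp.norm_def, eLpNorm_exponent_top]
  exact ENNReal.toReal_le_of_le_ofReal hC (eLpNormEssSup_le_of_ae_bound hf)

/-- A time-dependent multiplier `m t : α → ℝ` which is bounded and uniformly Lipschitz in time with
constant `1`. Boundedness is only recorded at time `0`, since the Lipschitz bound propagates it. -/
structure IsLipschitzMultiplier (m : ℝ → α → ℝ) : Prop where
  measurable : ∀ t, Measurable (m t)
  bounded_zero : ∃ b, ∀ x, |m 0 x| ≤ b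
  abs_sub_le : ∀ s t x, |m s x - m t x| ≤ |s - t|

namespace IsLipschitzMultiplier

variable {m : ℝ → α → ℝ} (hm : IsLipschitzMultiplier m)
include hm

lemma memLp_top (μ : Measure α) (t : ℝ) : MemLp (fun x => (m t x : ℂ)) ∞ μ := by
  obtain ⟨b, hb⟩ := hm.bounded_zero
  refine memLp_top_of_bound
    (Complex.measurable_ofReal.comp (hm.measurable t)).aestronglyMeasurable (|t - 0| + b) <|
    .of_forall fun x => ?_
  rw [Complex.norm_real, Real.norm_eq_abs]
  linarith [abs_sub_abs_le_abs_sub (m t x) (m 0 x), hm.abs_sub_le t 0 x, hb x]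

/-- Multiplication by `m t` on `L¹(μ)`, as a norm continuous family of operators. -/
noncomputable def mulL1 (μ : Measure α) : C(ℝ, (α →₁[μ] ℂ) →L[ℂ] (α →₁[μ] ℂ)) where
  toFun t := (ContinuousLinearMap.mul ℂ ℂ).holderL μ ∞ 1 1 ((hm.memLp_top μ t).toLp _)
  continuous_toFun := by
    refine (ContinuousLinearMap.continuous _).comp ?_
    refine (LipschitzWith.of_dist_le_mul (K := 1) fun s t => ?_).continuous
    rw [dist_eq_norm, ← MemLp.toLp_sub]
    refine norm_le_of_ae_bound_Linfty (by positivity) ?_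
    filter_upwards [MemLp.coeFn_toLp ((hm.memLp_top μ s).sub (hm.memLp_top μ t))] with x hx
    simpa [hx, ← Complex.ofReal_sub, Real.dist_eq] using hm.abs_sub_le s t x

lemma coeFn_mulL1 (t : ℝ) (f : α →₁[μ] ℂ) :
    hm.mulL1 μ t f =ᵐ[μ] fun x => (m t x : ℂ) * f x := by
  filter_upwards [(ContinuousLinearMap.mul ℂ ℂ).coeFn_holder (r := 1)
    ((hm.memLp_top μ t).toLp _) f, (hm.memLp_top μ t).coeFn_toLp] with x hx hmx
  exact hx.trans (by rw [hmx, ContinuousLinearMap.mul_apply'])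

lemma norm_mulL1_le {t b : ℝ} (hb : 0 ≤ b) (hmb : ∀ x, |m t x| ≤ b) : ‖hm.mulL1 μ t‖ ≤ b := by
  refine ContinuousLinearMap.opNorm_le_bound _ hb fun f => ?_
  refine ((ContinuousLinearMap.mul ℂ ℂ).norm_holder_apply_apply_le (r := 1) _ f).trans ?_
  have hnorm : ‖(hm.memLp_top μ t).toLp _‖ ≤ b := norm_le_of_ae_bound_Linfty hb <|
    (hm.memLp_top μ t).coeFn_toLp.mono fun x hx => by simpa [hx] using hmb x
  calc ‖ContinuousLinearMap.mul ℂ ℂ‖ * ‖(hm.memLp_top μ t).toLp _‖ * ‖f‖ ≤ 1 * b * ‖f‖ := by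
        gcongr
        exact ContinuousLinearMap.opNorm_mul_le ℂ ℂ
    _ = b * ‖f‖ := by rw [one_mul]

lemma abs_apply_le_abs (hm₀ : ∀ x, m 0 x = 0) (t : ℝ) (x : α) : |m t x| ≤ |t| := by
  simpa [hm₀ x] using hm.abs_sub_le t 0 x

end IsLipschitzMultiplier

end Multiplier

section BoussinesqMultipliers

lemma lam_nonneg (ξ : ℝ) : 0 ≤ lam ξ := by
  unfold lam
  positivity

lemma lam_le_one (ξ : ℝ) : lam ξ ≤ 1 := by
  rw [lam, ← Real.sqrt_eq_rpow]
  exact div_le_one_of_le₀ (Real.abs_le_sqrt (by linarith)) (Real.sqrt_nonneg _)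

lemma lam_pos {ξ : ℝ} (hξ : ξ ≠ 0) : 0 < lam ξ := by
  unfold lam
  positivity

lemma measurable_lam : Measurable lam := by
  unfold lam
  fun_prop

lemma abs_mul_lam_sub_mul_lam (s t ξ : ℝ) : |s * lam ξ - t * lam ξ| = |s - t| * lam ξ := by
  rw [← sub_mul, abs_mul, abs_of_nonneg (lam_nonneg ξ)]

lemma isLipschitzMultiplier_cos : IsLipschitzMultiplier fun t ξ => Real.cos (t * lam ξ) where
  measurable t := Real.measurable_cos.comp (measurable_lam.const_mul t)
  bounded_zero := ⟨1, fun ξ => Real.abs_cos_le_one _⟩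
  abs_sub_le s t ξ := by
    refine (Real.abs_cos_sub_cos_le _ _).trans ?_
    rw [abs_mul_lam_sub_mul_lam]
    exact mul_le_of_le_one_right (abs_nonneg _) (lam_le_one ξ)

lemma isLipschitzMultiplier_mker : IsLipschitzMultiplier mker where
  measurable t := by
    have := measurable_lam
    unfold mker
    exact Measurable.ite (measurableSet_singleton 0) (by fun_prop) (by fun_prop)
  bounded_zero := ⟨0, fun ξ => by simp [mker]⟩
  abs_sub_le s t ξ := by
    by_cases hξ : ξ = 0
    · simp [mker, hξ]
    · have hlam := lam_pos hξ
      simp only [mker, hξ, if_false]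
      rw [← sub_div, abs_div, abs_of_pos hlam, div_le_iff₀ hlam, ← abs_mul_lam_sub_mul_lam]
      exact Real.abs_sin_sub_sin_le _ _

lemma isLipschitzMultiplier_sin_mul_lam :
    IsLipschitzMultiplier fun t ξ => Real.sin (t * lam ξ) * lam ξ where
  measurable t := (Real.measurable_sin.comp (measurable_lam.const_mul t)).mul measurable_lam
  bounded_zero := ⟨0, fun ξ => by simp⟩
  abs_sub_le s t ξ := by
    have hsin : |Real.sin (s * lam ξ) - Real.sin (t * lam ξ)| ≤ |s - t| * lam ξ :=
      (Real.abs_sin_sub_sin_le _ _).trans_eq (abs_mul_lam_sub_mul_lam s t ξ)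
    rw [← sub_mul, abs_mul, abs_of_nonneg (lam_nonneg ξ)]
    calc |Real.sin (s * lam ξ) - Real.sin (t * lam ξ)| * lam ξ ≤ |s - t| * lam ξ * lam ξ :=
          mul_le_mul_of_nonneg_right hsin (lam_nonneg ξ)
      _ ≤ |s - t| := by
          rw [mul_assoc]
          exact mul_le_of_le_one_right (abs_nonneg _)
            (mul_le_one₀ (lam_le_one ξ) (lam_nonneg ξ) (lam_le_one ξ))

end BoussinesqMultipliers

section CurvesInL1

variable {α E : Type*} [MeasurableSpace α] {μ : Measure α} [NormedAddCommGroup E]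

lemma norm_setIntegral_coeFn_le [NormedSpace ℝ E] (s : Set α) (f : α →₁[μ] E) :
    ‖∫ a in s, f a ∂μ‖ ≤ ‖f‖ :=
  calc ‖∫ a in s, f a ∂μ‖ ≤ ∫ a in s, ‖f a‖ ∂μ := norm_integral_le_integral_norm _
    _ ≤ ∫ a, ‖f a‖ ∂μ :=
        setIntegral_le_integral (L1.integrable_coeFn f).norm (.of_forall fun _ => norm_nonneg _)
    _ = ‖f‖ := (L1.norm_eq_integral_norm f).symm

/-- Integration over the set `s`, as a continuous linear map on `L¹`. -/
noncomputable def setIntegralL1 [NormedSpace ℝ E] [CompleteSpace E] (μ : Measure α) (s : Set α) :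
    (α →₁[μ] E) →L[ℝ] E :=
  L1.integralCLM.comp (LpToLpRestrictCLM α E ℝ μ 1 s)

lemma setIntegralL1_apply [NormedSpace ℝ E] [CompleteSpace E] (s : Set α) (f : α →₁[μ] E) :
    setIntegralL1 μ s f = ∫ a in s, f a ∂μ :=
  (L1.integral_eq _).symm.trans <| (L1.integral_eq_integral _).trans <|
    integral_congr_ae (LpToLpRestrictCLM_coeFn ℝ s f)

lemma norm_toL1_add_norm_toL1_le {f g : α → E} (hf : Integrable f μ) (hg : Integrable g μ) {M : ℝ}
    (hM : 0 ≤ M) (hfg : eLpNorm f 1 μ + eLpNorm g 1 μ ≤ ENNReal.ofReal M) :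
    ‖hf.toL1 f‖ + ‖hg.toL1 g‖ ≤ M := by
  rw [← ENNReal.ofReal_le_ofReal_iff hM, ENNReal.ofReal_add (norm_nonneg _) (norm_nonneg _),
    ofReal_norm, ofReal_norm, Integrable.enorm_toL1, Integrable.enorm_toL1]
  simpa only [eLpNorm_one_eq_lintegral_enorm] using hfg

variable {X : Type*} [MeasurableSpace X] {ν : Measure X} [SFinite μ]
  {G : X → α →₁[μ] E} {g : X → α → E}

lemma integrable_uncurry_of_integrable_L1 (hG : Integrable G ν)
    (hg : StronglyMeasurable (Function.uncurry g)) (hGg : ∀ᵐ x ∂ν, G x =ᵐ[μ] g x) :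
    Integrable (Function.uncurry g) (ν.prod μ) := by
  refine (integrable_prod_iff hg.aestronglyMeasurable).mpr ⟨?_, hG.norm.congr ?_⟩
  · filter_upwards [hGg] with x hx
    exact (L1.integrable_coeFn (G x)).congr hx
  · filter_upwards [hGg] with x hx
    rw [L1.norm_eq_integral_norm]
    exact integral_congr_ae (hx.fun_comp norm)

lemma coeFn_integral_L1 [NormedSpace ℝ E] [CompleteSpace E] [SFinite ν] (hG : Integrable G ν)
    (hg : StronglyMeasurable (Function.uncurry g)) (hGg : ∀ᵐ x ∂ν, G x =ᵐ[μ] g x) :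
    (∫ x, G x ∂ν : α →₁[μ] E) =ᵐ[μ] fun a => ∫ x, g x a ∂ν := by
  have hint := integrable_uncurry_of_integrable_L1 hG hg hGg
  refine Integrable.ae_eq_of_forall_setIntegral_eq _ _ (L1.integrable_coeFn _)
    hint.integral_prod_right fun s _ _ => ?_
  have hint_s : Integrable (Function.uncurry g) (ν.prod (μ.restrict s)) := by
    rw [← Measure.restrict_univ (μ := ν), Measure.prod_restrict]
    exact hint.restrict
  calc ∫ a in s, (∫ x, G x ∂ν : α →₁[μ] E) a ∂μ = ∫ x, ∫ a in s, G x a ∂μ ∂ν := by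
        simp only [← setIntegralL1_apply, (setIntegralL1 μ s).integral_comp_comm hG]
    _ = ∫ x, ∫ a in s, g x a ∂μ ∂ν :=
        integral_congr_ae <| hGg.mono fun x hx => integral_congr_ae (ae_restrict_of_ae hx)
    _ = ∫ a in s, ∫ x, g x a ∂ν ∂μ := integral_integral_swap hint_s

lemma lipschitzWith_intervalIntegral_L1 [NormedSpace ℝ E] (a b : ℝ) :
    LipschitzWith 1 fun f : ℝ →₁[volume] E => ∫ y in a..b, f y := by
  refine LipschitzWith.of_dist_le_mul fun f g => ?_
  have hint (h : ℝ →₁[volume] E) : IntervalIntegrable h volume a b :=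
    (L1.integrable_coeFn h).intervalIntegrable
  rw [NNReal.coe_one, one_mul, dist_eq_norm, dist_eq_norm,
    ← intervalIntegral.integral_sub (hint f) (hint g), intervalIntegral.norm_intervalIntegral_eq]
  calc ‖∫ y in Set.uIoc a b, (f y - g y)‖ = ‖∫ y in Set.uIoc a b, (f - g) y‖ :=
        congrArg _ (integral_congr_ae (ae_restrict_of_ae (Lp.coeFn_sub f g).symm))
    _ ≤ ‖f - g‖ := norm_setIntegral_coeFn_le _ (f - g)

-- The version is recovered by differentiating the primitive, which is jointly continuous.
lemma exists_stronglyMeasurable_uncurry_ae_eq [NormedSpace ℝ E] [CompleteSpace E]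
    [TopologicalSpace X] [OpensMeasurableSpace X] [SecondCountableTopologyEither X E]
    (F : C(X, ℝ →₁[volume] E)) :
    ∃ g : X → ℝ → E, StronglyMeasurable (Function.uncurry g) ∧ ∀ x, F x =ᵐ[volume] g x := by
  have hprim : Continuous fun p : (ℝ →₁[volume] E) × ℝ => ∫ y in (0 : ℝ)..p.2, p.1 y :=
    continuous_prod_of_continuous_lipschitzWith _ 1
      (fun f => intervalIntegral.continuous_primitive
        (fun _ _ => (L1.integrable_coeFn f).intervalIntegrable) 0)
      (lipschitzWith_intervalIntegral_L1 0)
  have hprimF : Continuous (Function.uncurry fun x z => ∫ y in (0 : ℝ)..z, F x y) :=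
    hprim.comp (F.continuous.prodMap continuous_id)
  refine ⟨fun x => deriv fun z => ∫ y in (0 : ℝ)..z, F x y,
    stronglyMeasurable_deriv_with_param hprimF, fun x => ?_⟩
  filter_upwards [LocallyIntegrable.ae_hasDerivAt_integral
    (L1.integrable_coeFn (F x)).locallyIntegrable] with y hy
  exact (hy 0).deriv.symm

end CurvesInL1

section Representation

/-- Continuous curves `[0, T] → L¹(ℝ)`. -/
abbrev L1Curve (T : ℝ) : Type :=
  C(Set.Icc 0 T, ℝ →₁[volume] ℂ)

/-- The function `w` of time and frequency is a version of the curve `W` in `L¹(ℝ)`: at each time in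
`[0, T]` it agrees with `W` for almost every frequency. -/
def Represents {T : ℝ} (W : L1Curve T) (w : ℝ → ℝ → ℂ) : Prop :=
  ∀ t : Set.Icc 0 T, W t =ᵐ[volume] w t

variable {T : ℝ} {W W' : L1Curve T} {w w' : ℝ → ℝ → ℂ}

lemma exists_represents (hint : ∀ t ∈ Set.Icc 0 T, Integrable (w t)) (hw : ContinuousL1On T w) :
    ∃ W : L1Curve T, Represents W w := by
  refine ⟨⟨fun t => (hint t t.2).toL1 _, continuous_iff_continuousAt.mpr fun t₀ => ?_⟩,
    fun t => (hint t t.2).coeFn_toL1⟩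
  rw [ContinuousAt, tendsto_iff_edist_tendsto_0]
  have htendsto := tendsto_nhdsWithin_iff_subtype t₀.2 _ _ |>.mp (hw t₀ t₀.2)
  refine htendsto.congr fun t => ?_
  rw [edist_eq_enorm_sub, ← Integrable.toL1_sub, Integrable.enorm_toL1,
    ← eLpNorm_one_eq_lintegral_enorm]
  rfl

namespace Represents

lemma add (hW : Represents W w) (hW' : Represents W' w') :
    Represents (W + W') fun t ξ => w t ξ + w' t ξ := fun t =>
  (Lp.coeFn_add (W t) (W' t)).trans ((hW t).add (hW' t))

lemma sub (hW : Represents W w) (hW' : Represents W' w') :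
    Represents (W - W') fun t ξ => w t ξ - w' t ξ := fun t =>
  (Lp.coeFn_sub (W t) (W' t)).trans ((hW t).sub (hW' t))

lemma zero : Represents (0 : L1Curve T) fun _ _ => 0 := fun _ =>
  Lp.coeFn_zero ℂ 1 volume

lemma sum {ι : Type*} (s : Finset ι) {W : ι → L1Curve T} {w : ι → ℝ → ℝ → ℂ}
    (hW : ∀ i ∈ s, Represents (W i) (w i)) :
    Represents (∑ i ∈ s, W i) fun t ξ => ∑ i ∈ s, w i t ξ := by
  induction s using Finset.cons_induction with
  | empty => simpa using zero
  | cons i s hi ih =>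
    rw [Finset.forall_mem_cons] at hW
    simpa only [Finset.sum_cons] using hW.1.add (ih hW.2)

lemma eq_of_ae_eq (hW : Represents W w) (hW' : Represents W' w')
    (hww' : ∀ t ∈ Set.Icc 0 T, w t =ᵐ[volume] w' t) : W = W' :=
  ContinuousMap.ext fun t => Lp.ext ((hW t).trans ((hww' t t.2).trans (hW' t).symm))

lemma eLpNorm_eq (hW : Represents W w) (t : Set.Icc 0 T) : eLpNorm (w t) 1 volume = ‖W t‖ₑ := by
  rw [Lp.enorm_def, eLpNorm_congr_ae (hW t)]

lemma eLpNorm_le (hW : Represents W w) {t : ℝ} (ht : t ∈ Set.Icc 0 T) :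
    eLpNorm (w t) 1 volume ≤ ‖W‖ₑ := by
  rw [hW.eLpNorm_eq ⟨t, ht⟩]
  exact enorm_le_iff_norm_le.mpr (W.norm_coe_le_norm _)

lemma norm_le (hW : Represents W w) {R : ℝ} (hR : 0 ≤ R)
    (hw : ∀ t ∈ Set.Icc 0 T, eLpNorm (w t) 1 volume ≤ ENNReal.ofReal R) : ‖W‖ ≤ R :=
  (ContinuousMap.norm_le W hR).mpr fun t => by
    rw [← ENNReal.ofReal_le_ofReal_iff hR, ofReal_norm, ← hW.eLpNorm_eq]
    exact hw t t.2

lemma tendsto_eLpNorm_sub_sum (hW : Represents W w) {x : ℕ → L1Curve T} {f : ℕ → ℝ → ℝ → ℂ}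
    (hx : ∀ j, Represents (x j) (f j)) (hsum : HasSum x W) {t : ℝ} (ht : t ∈ Set.Icc 0 T) :
    Tendsto (fun J => eLpNorm (fun ξ => w t ξ - ∑ j ∈ Finset.range J, f j t ξ) 1 volume)
      atTop (nhds 0) := by
  have hlim : Tendsto (fun J => ‖W - ∑ j ∈ Finset.range J, x j‖ₑ) atTop (nhds 0) := by
    simpa only [edist_comm _ W, edist_eq_enorm_sub] using
      tendsto_iff_edist_tendsto_0.mp hsum.tendsto_sum_nat
  exact tendsto_of_tendsto_of_tendsto_of_le_of_le tendsto_const_nhds hlim (fun _ => zero_le)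
    fun J => (hW.sub (sum (Finset.range J) fun j _ => hx j)).eLpNorm_le ht

end Represents

lemma tsum_iSup_eLpNorm_lt_top {x : ℕ → L1Curve T} {f : ℕ → ℝ → ℝ → ℂ}
    (hx : ∀ j, Represents (x j) (f j)) (hsum : Summable fun j => ‖x j‖) :
    ∑' j, ⨆ t ∈ Set.Icc 0 T, eLpNorm (f j t) 1 volume < ∞ :=
  calc ∑' j, ⨆ t ∈ Set.Icc 0 T, eLpNorm (f j t) 1 volume ≤ ∑' j, ‖x j‖ₑ :=
        ENNReal.tsum_le_tsum fun j => iSup₂_le fun _ => (hx j).eLpNorm_le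
    _ < ∞ := by
        simp only [← ofReal_norm]
        exact hsum.tsum_ofReal_lt_top

end Representation

section FixedPointEquation

variable {T : ℝ}

/-- The linear part of the fixed point equation: the curve of solutions of the linear equation with
data `V₀`, `V₁`. -/
noncomputable def linearCurve (T : ℝ) (V₀ V₁ : ℝ →₁[volume] ℂ) : L1Curve T where
  toFun t := isLipschitzMultiplier_cos.mulL1 volume t V₀
    + isLipschitzMultiplier_mker.mulL1 volume t V₁

lemma represents_linearCurve {V₀ V₁ : ℝ →₁[volume] ℂ} {v₀ v₁ : ℝ → ℂ} (hV₀ : V₀ =ᵐ[volume] v₀)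
    (hV₁ : V₁ =ᵐ[volume] v₁) : Represents (linearCurve T V₀ V₁) fun t => Shat t v₀ v₁ := fun t => by
  refine (Lp.coeFn_add _ _).trans ?_
  filter_upwards [isLipschitzMultiplier_cos.coeFn_mulL1 t V₀,
    isLipschitzMultiplier_mker.coeFn_mulL1 t V₁, hV₀, hV₁] with ξ hcos hmker h₀ h₁
  rw [Pi.add_apply, hcos, hmker, h₀, h₁, Shat]

lemma norm_linearCurve_le (hT : T ≤ 1) (V₀ V₁ : ℝ →₁[volume] ℂ) :
    ‖linearCurve T V₀ V₁‖ ≤ ‖V₀‖ + ‖V₁‖ := by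
  refine (ContinuousMap.norm_le _ (by positivity)).mpr fun t => ?_
  have hcos : ‖isLipschitzMultiplier_cos.mulL1 volume (t : ℝ)‖ ≤ 1 :=
    isLipschitzMultiplier_cos.norm_mulL1_le zero_le_one fun _ => Real.abs_cos_le_one _
  have hmker : ‖isLipschitzMultiplier_mker.mulL1 volume (t : ℝ)‖ ≤ 1 :=
    isLipschitzMultiplier_mker.norm_mulL1_le zero_le_one fun ξ =>
      (isLipschitzMultiplier_mker.abs_apply_le_abs (fun _ => by simp [mker]) t ξ).trans
        (abs_le.mpr ⟨by linarith [t.2.1], t.2.2.trans hT⟩)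
  exact norm_add_le_of_le (by simpa using ContinuousLinearMap.le_of_opNorm_le _ hcos V₀)
    (by simpa using ContinuousLinearMap.le_of_opNorm_le _ hmker V₁)

lemma norm_mulL1_sin_mul_lam_le {τ : ℝ} (hτ : τ ∈ Set.Icc 0 T) :
    ‖isLipschitzMultiplier_sin_mul_lam.mulL1 volume τ‖ ≤ T :=
  isLipschitzMultiplier_sin_mul_lam.norm_mulL1_le (hτ.1.trans hτ.2) fun ξ =>
    (isLipschitzMultiplier_sin_mul_lam.abs_apply_le_abs (fun _ => by simp) τ ξ).trans
      ((abs_of_nonneg hτ.1).trans_le hτ.2)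

/-- The Duhamel operator `Î_{n + 1}` as a continuous multilinear map on curves in `L¹(ℝ)`. -/
noncomputable def duhamel (hT : 0 ≤ T) (n : ℕ) :
    ContinuousMultilinearMap ℂ (fun _ : Fin (n + 1) => L1Curve T) (L1Curve T) :=
  (volterra hT (isLipschitzMultiplier_sin_mul_lam.mulL1 volume)
    fun _ => norm_mulL1_sin_mul_lam_le).compContinuousMultilinearMap
      (pointwiseMultilinear (convPowL1 n))

lemma norm_duhamel_le (hT : 0 ≤ T) (n : ℕ) : ‖duhamel hT n‖ ≤ T ^ 2 :=
  calc ‖duhamel hT n‖ ≤ T * T * 1 :=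
        (ContinuousLinearMap.norm_compContinuousMultilinearMap_le _ _).trans <|
          mul_le_mul (norm_volterra_le hT _ _)
            ((norm_pointwiseMultilinear_le _).trans (norm_convPowL1_le_one n))
            (norm_nonneg _) (mul_nonneg hT hT)
    _ = T ^ 2 := by ring

lemma stronglyMeasurable_uncurry_duhamel_integrand (t : ℝ) (n : ℕ) {g : Fin (n + 1) → ℝ → ℝ → ℂ}
    (hg : ∀ i, StronglyMeasurable (Function.uncurry (g i))) :
    StronglyMeasurable (Function.uncurry fun s ξ =>
      ((Real.sin ((t - s) * lam ξ) * lam ξ : ℝ) : ℂ) * convList (List.ofFn fun i => g i s) ξ) := by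
  have hlam := measurable_lam
  have hmul : Measurable fun q : ℝ × ℝ =>
      ((Real.sin ((t - q.1) * lam q.2) * lam q.2 : ℝ) : ℂ) := by fun_prop
  exact hmul.stronglyMeasurable.mul (stronglyMeasurable_uncurry_convList n hg)

-- The integrand of `Ihat` need not be jointly measurable, but replacing its arguments by jointly
-- measurable versions does not change it at any frequency, because at least two factors are
-- convolved.
lemma represents_duhamel (hT : 0 ≤ T) (n : ℕ) {W : Fin (n + 2) → L1Curve T}
    {w : Fin (n + 2) → ℝ → ℝ → ℂ} (hW : ∀ i, Represents (W i) (w i)) :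
    Represents (duhamel hT (n + 1) W) (Ihat (n + 2) w) := by
  rintro ⟨t, ht₀, htT⟩
  choose g hg hWg using fun i => exists_stronglyMeasurable_uncurry_ae_eq ((W i).IccExtend hT)
  let K := isLipschitzMultiplier_sin_mul_lam.mulL1 volume
  let D : L1Curve T := pointwiseMultilinear (convPowL1 (n + 1)) W
  have hD (s : ℝ) : D.IccExtend hT s = convPowL1 (n + 1) fun i => (W i).IccExtend hT s :=
    pointwiseMultilinear_apply (convPowL1 (n + 1)) W (Set.projIcc 0 T hT s)
  have hversion (s : ℝ) : K (t - s) (D.IccExtend hT s) =ᵐ[volume] fun ξ =>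
      ((Real.sin ((t - s) * lam ξ) * lam ξ : ℝ) : ℂ) * convList (List.ofFn fun i => g i s) ξ := by
    filter_upwards [isLipschitzMultiplier_sin_mul_lam.coeFn_mulL1 (t - s) (D.IccExtend hT s),
      coeFn_convPowL1 (n + 1) fun i => hWg i s] with ξ hmul hconv
    rw [hmul, hD, hconv]
  have hint : IntegrableOn (fun s => K (t - s) (D.IccExtend hT s)) (Set.Ioc 0 t) :=
    ((continuous_volterra_integrand hT K D).uncurry_left t).integrableOn_Ioc
  have hconv {s : ℝ} (hs : s ∈ Set.Ioc 0 t) :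
      convList (List.ofFn fun i => g i s) = convList (List.ofFn fun i => w i s) := by
    have hs' : s ∈ Set.Icc 0 T := ⟨hs.1.le, hs.2.trans htT⟩
    refine convList_ofFn_congr n fun i => (hWg i s).symm.trans ?_
    simpa [Set.IccExtend_of_mem hT _ hs'] using hW i ⟨s, hs'⟩
  have hduhamel : duhamel hT (n + 1) W ⟨t, ht₀, htT⟩
      = ∫ s in Set.Ioc 0 t, K (t - s) (D.IccExtend hT s) :=
    (volterra_apply hT K _ D ⟨t, ht₀, htT⟩).trans (intervalIntegral.integral_of_le ht₀)
  rw [hduhamel]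
  refine (coeFn_integral_L1 hint (stronglyMeasurable_uncurry_duhamel_integrand t (n + 1) hg)
    (.of_forall hversion)).trans (.of_forall fun ξ => ?_)
  rw [Ihat, intervalIntegral.integral_of_le ht₀]
  exact setIntegral_congr_fun measurableSet_Ioc fun s hs => by simp only [hconv hs]

lemma Xi_succ (k : ℕ) (v₀ v₁ : ℝ → ℂ) (j : ℕ) (t ξ : ℝ) :
    Xi k v₀ v₁ (j + 1) t ξ = ∑ p ∈ Finset.Nat.antidiagonalTuple k j,
      Ihat k (fun i => Xi k v₀ v₁ (p i)) t ξ := by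
  rw [Xi]
  exact Finset.sum_attach (Finset.Nat.antidiagonalTuple k j)
    fun p => Ihat k (fun i => Xi k v₀ v₁ (p i)) t ξ

lemma represents_picardTerm_duhamel (hT : 0 ≤ T) (n : ℕ) {a : L1Curve T} {v₀ v₁ : ℝ → ℂ}
    (ha : Represents a fun t => Shat t v₀ v₁) (j : ℕ) :
    Represents (picardTerm (duhamel hT (n + 1)) a j) (Xi (n + 2) v₀ v₁ j) := by
  induction j using Nat.strong_induction_on with
  | _ j ih =>
    cases j with
    | zero => simpa [picardTerm_zero, Xi] using ha
    | succ j =>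
      rw [picardTerm_succ, funext₂ (Xi_succ (n + 2) v₀ v₁ j)]
      exact .sum _ fun p hp => represents_duhamel hT n fun i =>
        ih (p i) (Nat.lt_succ_of_le (apply_le_of_mem_antidiagonalTuple hp i))

lemma IsGIBqSol.exists_represents_eq (hT : 0 ≤ T) (n : ℕ) {a : L1Curve T} {v₀ v₁ : ℝ → ℂ}
    {v : ℝ → ℝ → ℂ} (ha : Represents a fun t => Shat t v₀ v₁)
    (hv : IsGIBqSol (n + 2) T v₀ v₁ v) :
    ∃ W : L1Curve T, Represents W v ∧ W = a + duhamel hT (n + 1) fun _ => W := by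
  obtain ⟨hint, hcont, heq⟩ := hv
  obtain ⟨W, hW⟩ := exists_represents hint hcont
  exact ⟨W, hW, hW.eq_of_ae_eq (ha.add (represents_duhamel hT n fun _ => hW)) heq⟩

end FixedPointEquation

section Smallness

lemma mul_two_mul_pow_le_half {k : ℕ} (hk : k ≠ 0) {q A M : ℝ} (hM : 0 ≤ M) (hq : q ≤ A)
    (hA : A * M ^ (k - 1) ≤ 1 / (k * 2 ^ k)) : q * k * (2 * M) ^ (k - 1) ≤ 1 / 2 :=
  calc q * k * (2 * M) ^ (k - 1) ≤ A * k * (2 * M) ^ (k - 1) := by gcongr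
    _ = k * 2 ^ (k - 1) * (A * M ^ (k - 1)) := by rw [mul_pow]; ring
    _ ≤ k * 2 ^ (k - 1) * (1 / (k * 2 ^ k)) := by gcongr
    _ = 1 / 2 := by
      rw [← pow_sub_one_mul hk (2 : ℝ)]
      field_simp

lemma add_mul_pow_le_of_mul_pow_le_half {k : ℕ} (hk : k ≠ 0) {b q R : ℝ} (hq : 0 ≤ q) (hR : 0 ≤ R)
    (hb : b ≤ R / 2) (h : q * k * R ^ (k - 1) ≤ 1 / 2) : b + q * R ^ k ≤ R := by
  have hk' : (1 : ℝ) ≤ k := mod_cast Nat.one_le_iff_ne_zero.mpr hk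
  have hqR : q * R ^ (k - 1) ≤ 1 / 2 :=
    calc q * R ^ (k - 1) ≤ q * R ^ (k - 1) * k := le_mul_of_one_le_right (by positivity) hk'
      _ = q * k * R ^ (k - 1) := by ring
      _ ≤ 1 / 2 := h
  calc b + q * R ^ k = b + q * R ^ (k - 1) * R := by rw [mul_assoc, pow_sub_one_mul hk]
    _ ≤ R / 2 + 1 / 2 * R := by gcongr
    _ = R := by ring

end Smallness

/-- Power series expansion of the `FL¹` solution of gIBq: the solution is given by the
absolutely convergent series of Picard iterates. -/
theorem power_series_expansion_FL1 (k : ℕ) (hk : 2 ≤ k) :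
    ∃ c : ℝ, 0 < c ∧
      ∀ M : ℝ, 0 < M →
        ∀ T : ℝ, 0 < T → T ≤ 1 → T ^ 2 * M ^ (k - 1) ≤ c →
          ∀ v₀ v₁ : ℝ → ℂ, Integrable v₀ → Integrable v₁ →
            eLpNorm v₀ 1 volume + eLpNorm v₁ 1 volume ≤ ENNReal.ofReal M →
            ∀ v : ℝ → ℝ → ℂ, IsGIBqSol k T v₀ v₁ v →
              (∀ t ∈ Set.Icc (0 : ℝ) T, eLpNorm (v t) 1 volume ≤ ENNReal.ofReal (2 * M)) →
              (∑' j : ℕ, ⨆ t ∈ Set.Icc (0 : ℝ) T, eLpNorm (Xi k v₀ v₁ j t) 1 volume) < ⊤ ∧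
              ∀ t ∈ Set.Icc (0 : ℝ) T,
                Tendsto
                  (fun J : ℕ =>
                    eLpNorm (fun ξ => v t ξ - ∑ j ∈ Finset.range J, Xi k v₀ v₁ j t ξ) 1 volume)
                  atTop (nhds 0) := by
  obtain ⟨n, rfl⟩ : ∃ n, k = n + 2 := ⟨k - 2, by lia⟩
  refine ⟨1 / ((n + 2 : ℕ) * 2 ^ (n + 2)), by positivity,
    fun M hM T hT hT1 hTM v₀ v₁ hv₀ hv₁ hdata v hv hvM => ?_⟩
  set a := linearCurve T (hv₀.toL1 v₀) (hv₁.toL1 v₁)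
  have ha : Represents a fun t => Shat t v₀ v₁ :=
    represents_linearCurve hv₀.coeFn_toL1 hv₁.coeFn_toL1
  have haM : ‖a‖ ≤ M :=
    (norm_linearCurve_le hT1 _ _).trans (norm_toL1_add_norm_toL1_le hv₀ hv₁ hM.le hdata)
  have hXi := represents_picardTerm_duhamel hT.le n ha
  obtain ⟨W, hW, hfixed⟩ := hv.exists_represents_eq hT.le n ha
  have hhalf : ‖duhamel hT.le (n + 1)‖ * (n + 2 : ℕ) * (2 * M) ^ (n + 2 - 1) ≤ 1 / 2 :=
    mul_two_mul_pow_le_half (by lia) hM.le (norm_duhamel_le hT.le _) hTM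
  have hself : ‖a‖ + ‖duhamel hT.le (n + 1)‖ * (2 * M) ^ (n + 2) ≤ 2 * M :=
    add_mul_pow_le_of_mul_pow_le_half (by lia) (by positivity) (by positivity) (by linarith) hhalf
  have hseries : HasSum (picardTerm (duhamel hT.le (n + 1)) a) W :=
    hasSum_picardTerm _ _ (by positivity) hself (by linarith) hfixed
      (hW.norm_le (by positivity) hvM)
  exact ⟨tsum_iSup_eLpNorm_lt_top hXi (summable_norm_picardTerm _ _ (by positivity) hself),
    fun t ht => hW.tendsto_eLpNorm_sub_sum hXi hseries ht⟩
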